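/- arXiv:2211.07978 — 2 statements merged into one kernel-verified Lean document; each statement's English description precedes it below -/
import Mathlib

section
/- The bipyramid collapses to its subcomplex generated by the edge {v,a⁻} and the three triangles {u,v,a⁺}, {u,w,a⁺}, {v,w,a⁺}, i.e., to the subcomplex consisting of all faces contained in one of these four faces. -/
/-!
STATEMENT 1: The bipyramid collapses to its subcomplex generated by the edge
{v,a⁻} and the three triangles {u,v,a⁺}, {u,w,a⁺}, {v,w,a⁺}.
-/

namespace PaperFormal

variable {V : Type*}

/-- `K` is a finite abstract simplicial complex: a collection of finite nonempty
sets closed under taking nonempty subsets. -/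
def IsComplex (K : Set (Finset V)) : Prop :=
  (∀ σ ∈ K, σ ≠ ∅) ∧ ∀ σ ∈ K, ∀ τ : Finset V, τ ⊆ σ → τ ≠ ∅ → τ ∈ K

/-- A facet is an inclusion-maximal face. -/
def IsFacet (K : Set (Finset V)) (σ : Finset V) : Prop :=
  σ ∈ K ∧ ∀ τ ∈ K, σ ⊆ τ → σ = τ

/-- An elementary collapse of `K` to `K'` through the free face `σ`, whose unique
containing facet is `F`: it removes `σ` and all faces containing it. -/
def ElemCollapseVia (K K' : Set (Finset V)) (σ F : Finset V) : Prop :=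
  σ ∈ K ∧ ¬ IsFacet K σ ∧ IsFacet K F ∧ σ ⊆ F ∧
    (∀ G, IsFacet K G → σ ⊆ G → G = F) ∧
    K' = {τ ∈ K | ¬ σ ⊆ τ}

/-- An elementary collapse. -/
def ElemCollapse (K K' : Set (Finset V)) : Prop :=
  ∃ σ F, ElemCollapseVia K K' σ F

/-- `K` collapses to `L` via a finite sequence of elementary collapses. -/
def Collapses (K L : Set (Finset V)) : Prop :=
  ∃ (c : ℕ → Set (Finset V)) (n : ℕ), c 0 = K ∧ c n = L ∧
    ∀ i < n, ElemCollapse (c i) (c (i + 1))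

/-- The subcomplex of `K` generated by the faces in `S`: all faces of `K`
contained in some member of `S`. -/
def generatedBy (K S : Set (Finset V)) : Set (Finset V) :=
  {τ ∈ K | ∃ θ ∈ S, τ ⊆ θ}

/-- The bipyramid on vertices `u, v, w, ap, am`: the join of the boundary of the
triangle `uvw` with the edge `ap am`; its faces are the nonempty sets `σ ∪ τ`
with `σ ⊊ {u,v,w}` and `τ ⊆ {ap,am}`. -/
def bipyramid [DecidableEq V] (u v w ap am : V) : Set (Finset V) :=
  {F : Finset V | F ≠ ∅ ∧ F ⊆ {u, v, w, ap, am} ∧ ¬ ({u, v, w} : Finset V) ⊆ F}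

/-!
The link of `a⁻` in the bipyramid is the cone with apex `a⁺` over the boundary of the triangle
`uvw`. This disc collapses to the vertex `v`: remove in turn the edge `uw` and the vertices `u`,
`w` and `a⁺`. Joining these faces with `a⁻` gives the free faces of a collapse of the bipyramid,
after which the only faces left at `a⁻` are those of the edge `{v, a⁻}`.

To verify freeness, present each complex by nonfaces. A face `σ` is free as soon as the vertices
`x` for which `σ ∪ {x}` contains none of the listed nonfaces all lie in one larger face.
-/

namespace Collapses

theorem refl (K : Set (Finset V)) : Collapses K K :=
  ⟨fun _ => K, 0, rfl, rfl, fun _ hi => absurd hi (Nat.not_lt_zero _)⟩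

theorem head {K L M : Set (Finset V)} (hKL : ElemCollapse K L) (hLM : Collapses L M) :
    Collapses K M := by
  obtain ⟨c, n, rfl, rfl, hc⟩ := hLM
  refine ⟨fun | 0 => K | i + 1 => c i, n + 1, rfl, rfl, ?_⟩
  rintro (_ | i) hi
  · exact hKL
  · exact hc i (Nat.lt_of_succ_lt_succ hi)

end Collapses

theorem elemCollapse_of_isGreatest {K : Set (Finset V)} {σ F : Finset V} (hσ : σ ∈ K)
    (hσF : σ ≠ F) (hF : IsGreatest {τ ∈ K | σ ⊆ τ} F) :
    ElemCollapse K {τ ∈ K | ¬ σ ⊆ τ} := by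
  obtain ⟨⟨hFK, hsub⟩, hmax⟩ := hF
  have not_isFacet : ¬ IsFacet K σ := fun h => hσF (h.2 F hFK hsub)
  have isFacet : IsFacet K F :=
    ⟨hFK, fun τ hτ hFτ => hFτ.antisymm (hmax ⟨hτ, hsub.trans hFτ⟩)⟩
  exact ⟨σ, F, hσ, not_isFacet, isFacet, hsub,
    fun G hG hσG => hG.2 F hFK (hmax ⟨hG.1, hσG⟩), rfl⟩

/-- The simplicial complex on the vertex set `X` presented by a family `N` of nonfaces: its faces
are the nonempty subsets of `X` containing no member of `N`. Deleting a face together with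
everything above it amounts to adding that face to `N`. -/
def nonfaceComplex (X : Finset V) (N : Set (Finset V)) : Set (Finset V) :=
  {τ | τ ≠ ∅ ∧ τ ⊆ X ∧ ∀ ν ∈ N, ¬ ν ⊆ τ}

theorem nonfaceComplex_insert (X : Finset V) (N : Set (Finset V)) (σ : Finset V) :
    nonfaceComplex X (insert σ N) = {τ ∈ nonfaceComplex X N | ¬ σ ⊆ τ} := by
  ext τ
  simp only [nonfaceComplex, Set.forall_mem_insert, Set.mem_ofPred_eq]
  tauto

section DecidableEq

variable [DecidableEq V]

theorem elemCollapse_nonfaceComplex_insert {X : Finset V} {N : Set (Finset V)} {σ F : Finset V}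
    (hσ : σ ≠ ∅) (hσF : σ ⊂ F) (hFX : F ⊆ X) (hFN : ∀ ν ∈ N, ¬ ν ⊆ F)
    (hmax : ∀ x ∈ X, x ∈ F ∨ ∃ ν ∈ N, ν ⊆ insert x σ) :
    ElemCollapse (nonfaceComplex X N) (nonfaceComplex X (insert σ N)) := by
  have hσK : σ ∈ nonfaceComplex X N :=
    ⟨hσ, hσF.subset.trans hFX, fun ν hν h => hFN ν hν (h.trans hσF.subset)⟩
  have hFK : F ∈ nonfaceComplex X N :=
    ⟨(Finset.nonempty_iff_ne_empty.2 hσ).mono hσF.subset |>.ne_empty, hFX, hFN⟩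
  rw [nonfaceComplex_insert]
  refine elemCollapse_of_isGreatest hσK hσF.ne ⟨⟨hFK, hσF.subset⟩, ?_⟩
  rintro τ ⟨⟨-, hτX, hτN⟩, hστ⟩ x hxτ
  obtain hxF | ⟨ν, hν, hsub⟩ := hmax x (hτX hxτ)
  · exact hxF
  · exact absurd (hsub.trans (Finset.insert_subset hxτ hστ)) (hτN ν hν)

theorem bipyramid_eq_nonfaceComplex (u v w ap am : V) :
    bipyramid u v w ap am = nonfaceComplex {u, v, w, ap, am} {{u, v, w}} := by
  simp only [bipyramid, nonfaceComplex, Set.mem_singleton_iff, forall_eq]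

theorem subset_triangle_of_mem_bipyramid {u v w ap am : V} {τ : Finset V}
    (hτ : τ ∈ bipyramid u v w ap am) (ham : am ∉ τ) :
    τ ⊆ {u, v, ap} ∨ τ ⊆ {u, w, ap} ∨ τ ⊆ {v, w, ap} := by
  obtain ⟨-, hX, huvw⟩ := hτ
  have missing : u ∉ τ ∨ v ∉ τ ∨ w ∉ τ := by grind
  rcases missing with hu | hv | hw
  · exact .inr (.inr (by grind))
  · exact .inr (.inl (by grind))
  · exact .inl (by grind)

theorem generatedBy_bipyramid_eq_setOf {u v w ap am : V}
    (ham : am ∉ ({u, v, w, ap} : Finset V)) :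
    generatedBy (bipyramid u v w ap am) {{v, am}, {u, v, ap}, {u, w, ap}, {v, w, ap}} =
      {τ ∈ bipyramid u v w ap am | am ∈ τ → τ ⊆ {v, am}} := by
  ext τ
  refine and_congr_right fun hτ => ?_
  simp only [Set.mem_insert_iff, Set.mem_singleton_iff, exists_eq_or_imp, exists_eq_left]
  constructor
  · grind
  · intro h
    by_cases hamτ : am ∈ τ
    · exact .inl (h hamτ)
    · exact .inr (subset_triangle_of_mem_bipyramid hτ hamτ)

theorem generatedBy_bipyramid_eq_nonfaceComplex {u v w ap am : V}
    (hv : v ∉ ({u, w, ap} : Finset V)) (ham : am ∉ ({u, v, w, ap} : Finset V)) :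
    generatedBy (bipyramid u v w ap am) {{v, am}, {u, v, ap}, {u, w, ap}, {v, w, ap}} =
      nonfaceComplex {u, v, w, ap, am} {{ap, am}, {w, am}, {u, am}, {u, w, am}, {u, v, w}} := by
  rw [generatedBy_bipyramid_eq_setOf ham]
  ext τ
  have subset_iff (hX : τ ⊆ {u, v, w, ap, am}) : τ ⊆ {v, am} ↔ u ∉ τ ∧ w ∉ τ ∧ ap ∉ τ := by
    grind
  simp only [bipyramid, nonfaceComplex, Set.mem_ofPred_eq, Set.forall_mem_insert,
    Set.mem_singleton_iff, forall_eq, Finset.insert_subset_iff, Finset.singleton_subset_iff]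
  tauto

end DecidableEq

/-- Lemma 2.2(ii): the bipyramid collapses to the subcomplex generated by the edge
`{v,a⁻}` and the triangles `{u,v,a⁺}`, `{u,w,a⁺}`, `{v,w,a⁺}`. -/
theorem bipyramid_collapses_neg [DecidableEq V] (u v w ap am : V)
    (hdist : ({u, v, w, ap, am} : Finset V).card = 5) :
    Collapses (bipyramid u v w ap am)
      (generatedBy (bipyramid u v w ap am)
        ({{v, am}, {u, v, ap}, {u, w, ap}, {v, w, ap}} : Set (Finset V))) := by
  have hnodup : [u, v, w, ap, am].Nodup :=
    Multiset.coe_nodup.1 (Multiset.toFinset_card_eq_card_iff_nodup.1 (by simpa using hdist))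
  rw [generatedBy_bipyramid_eq_nonfaceComplex (by grind) (by grind),
    bipyramid_eq_nonfaceComplex]
  refine
    .head (elemCollapse_nonfaceComplex_insert
      (σ := {u, w, am}) (F := {u, w, ap, am}) (Finset.insert_ne_empty _ _) ?_ ?_ ?_ ?_) <|
    .head (elemCollapse_nonfaceComplex_insert
      (σ := {u, am}) (F := {u, v, ap, am}) (Finset.insert_ne_empty _ _) ?_ ?_ ?_ ?_) <|
    .head (elemCollapse_nonfaceComplex_insert
      (σ := {w, am}) (F := {v, w, ap, am}) (Finset.insert_ne_empty _ _) ?_ ?_ ?_ ?_) <|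
    .head (elemCollapse_nonfaceComplex_insert
      (σ := {ap, am}) (F := {v, ap, am}) (Finset.insert_ne_empty _ _) ?_ ?_ ?_ ?_) <|
    .refl _
  all_goals
    simp only [Set.mem_insert_iff, Set.mem_singleton_iff, exists_eq_or_imp, exists_eq_left,
      forall_eq_or_imp, forall_eq, Finset.mem_insert, Finset.mem_singleton,
      Finset.insert_subset_iff, Finset.singleton_subset_iff, ssubset_iff_subset_not_subset]
    grind

end PaperFormal
end

section
/- If a finite 2-dimensional simplicial complex K collapses to a complex consisting of a single triangle and its faces by a sequence of elementary collapses each of which is a (2,0) collapse or a (2,1) collapse, then K is pure 2-dimensional and shellable. -/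
/-!
STATEMENT 8 (Observation 13.2): if a finite 2-dimensional complex collapses to a
single triangle using only (2,0) and (2,1) collapses, then it is pure
2-dimensional and shellable.
-/

namespace PaperFormal

variable {V : Type*}

/-- `K` is pure of dimension `d`. -/
def PureDim (K : Set (Finset V)) (d : ℕ) : Prop :=
  K.Nonempty ∧ ∀ σ, IsFacet K σ → σ.card = d + 1

/-- `K[θ_1,…,θ_m]` for the list `l = [θ_1,…,θ_m]`. -/
def generatedByL (K : Set (Finset V)) (l : List (Finset V)) : Set (Finset V) :=
  {τ ∈ K | ∃ θ ∈ l, τ ⊆ θ}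

/-- The shelling-up condition. -/
def UpSteps (K : Set (Finset V)) (d : ℕ) (l : List (Finset V)) : Prop :=
  ∀ i, 0 < i → i < l.length →
    PureDim (generatedByL K [l.getD i ∅] ∩ generatedByL K (l.take i)) (d - 1)

/-- `l` is a shelling up of `K`. -/
def IsShellingUp (K : Set (Finset V)) (d : ℕ) (l : List (Finset V)) : Prop :=
  l.Nodup ∧ (∀ σ, σ ∈ l ↔ IsFacet K σ) ∧ UpSteps K d l

/-- `K` is shellable (with facets of dimension `d`). -/
def Shellable (K : Set (Finset V)) (d : ℕ) : Prop :=
  ∃ l, IsShellingUp K d l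

/-- An `(i,j)` collapse: the free face has dimension `j` and its unique
containing facet has dimension `i`. -/
def ElemCollapseIJ (K K' : Set (Finset V)) (i j : ℕ) : Prop :=
  ∃ σ F, ElemCollapseVia K K' σ F ∧ σ.card = j + 1 ∧ F.card = i + 1

/-!
Reverse the collapses. A collapse of `K` through a free face `σ` of the facet `F` deletes exactly
the faces between `σ` and `F`, so undoing it attaches `F` along the faces of `F` that do not contain
`σ`. The maximal ones among these are the ridges `F \ {w}` with `w ∈ σ`, hence the attaching complex
is pure of codimension one in `F`. A shelling of the collapsed complex followed by `F` is therefore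
a shelling of `K`, and the facets stay of the same dimension because `F` has that dimension.
-/

section Facets

variable {K : Set (Finset V)} {τ : Finset V}

theorem isFacet_iff_maximal : IsFacet K τ ↔ Maximal (· ∈ K) τ :=
  and_congr_right fun _ =>
    ⟨fun h ρ hρ hτρ => (h ρ hρ hτρ).ge, fun h _ hρ hτρ => hτρ.antisymm (h hρ hτρ)⟩

theorem exists_isFacet_superset (hfin : K.Finite) (hτ : τ ∈ K) : ∃ G, IsFacet K G ∧ τ ⊆ G := by
  obtain ⟨G, hτG, hG⟩ := hfin.exists_le_maximal hτ
  exact ⟨G, isFacet_iff_maximal.2 hG, hτG⟩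

theorem generatedByL_eq_self (hfin : K.Finite) {l : List (Finset V)}
    (hl : ∀ θ, θ ∈ l ↔ IsFacet K θ) : generatedByL K l = K := by
  refine Set.sep_eq_self_iff_mem_true.2 fun τ hτ => ?_
  obtain ⟨G, hG, hτG⟩ := exists_isFacet_superset hfin hτ
  exact ⟨G, (hl G).2 hG, hτG⟩

end Facets

section UpSteps

variable {K L : Set (Finset V)} {l : List (Finset V)} {F : Finset V} {d : ℕ}

theorem upSteps_congr (h : ∀ l' ⊆ l, generatedByL K l' = generatedByL L l') :
    UpSteps K d l ↔ UpSteps L d l := by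
  refine forall_congr' fun i => imp_congr_right fun _ => imp_congr_right fun hi => ?_
  have hmem : l.getD i ∅ ∈ l := by
    rw [List.getD_eq_getElem _ _ hi]
    exact List.getElem_mem hi
  rw [h _ (List.cons_subset.2 ⟨hmem, List.nil_subset l⟩), h _ (List.take_subset i l)]

theorem upSteps_concat (hl : UpSteps K d l)
    (hF : PureDim (generatedByL K [F] ∩ generatedByL K l) (d - 1)) :
    UpSteps K d (l ++ [F]) := by
  intro i hi_pos hi
  rw [List.length_append, List.length_singleton, Nat.lt_succ_iff] at hi
  rcases hi.lt_or_eq with hi_lt | rfl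
  · rw [List.getD_append _ _ _ _ hi_lt, List.take_append_of_le_length hi]
    exact hl i hi_pos hi_lt
  · simpa using hF

end UpSteps

/-- The complex of all faces of the simplex with vertex set `t`. -/
def simplexComplex (t : Finset V) : Set (Finset V) :=
  {σ | σ ≠ ∅ ∧ σ ⊆ t}

section Simplex

variable {t F σ τ : Finset V} {d : ℕ}

theorem finite_simplexComplex (t : Finset V) : (simplexComplex t).Finite :=
  t.powerset.finite_toSet.subset fun _ hσ => Finset.mem_powerset.2 hσ.2

theorem isFacet_simplexComplex_iff (ht : t.Nonempty) : IsFacet (simplexComplex t) τ ↔ τ = t := by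
  have ht_mem : t ∈ simplexComplex t := ⟨ht.ne_empty, subset_rfl⟩
  refine ⟨fun h => h.2 t ht_mem h.1.2, ?_⟩
  rintro rfl
  exact ⟨ht_mem, fun ρ hρ hτρ => hτρ.antisymm hρ.2⟩

theorem pureDim_simplexComplex (ht : t.card = d + 1) : PureDim (simplexComplex t) d := by
  have ht_ne : t.Nonempty := Finset.card_pos.1 (by lia)
  refine ⟨⟨t, ht_ne.ne_empty, subset_rfl⟩, fun σ hσ => ?_⟩
  rwa [(isFacet_simplexComplex_iff ht_ne).1 hσ]

theorem shellable_simplexComplex (ht : t.Nonempty) (d : ℕ) : Shellable (simplexComplex t) d := by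
  refine ⟨[t], List.nodup_singleton t, fun σ => ?_, fun i hi_pos hi => ?_⟩
  · rw [List.mem_singleton, isFacet_simplexComplex_iff ht]
  · rw [List.length_singleton] at hi
    lia

theorem erase_mem_simplexComplex_avoiding [DecidableEq V] (hσF : σ ⊂ F) {w : V} (hw : w ∈ σ) :
    F.erase w ∈ {τ ∈ simplexComplex F | ¬ σ ⊆ τ} := by
  obtain ⟨v, hvF, hvσ⟩ := Finset.exists_of_ssubset hσF
  have hvw : v ≠ w := fun h => hvσ (h ▸ hw)
  exact ⟨⟨Finset.ne_empty_of_mem (Finset.mem_erase.2 ⟨hvw, hvF⟩), Finset.erase_subset w F⟩,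
    fun h => Finset.notMem_erase w F (h hw)⟩

theorem exists_eq_erase_of_isFacet_avoiding [DecidableEq V] (hσF : σ ⊂ F)
    (hτ : IsFacet {τ ∈ simplexComplex F | ¬ σ ⊆ τ} τ) : ∃ w ∈ σ, τ = F.erase w := by
  obtain ⟨⟨⟨-, hτF⟩, hστ⟩, hmax⟩ := hτ
  obtain ⟨w, hwσ, hwτ⟩ := Finset.not_subset.1 hστ
  exact ⟨w, hwσ, hmax _ (erase_mem_simplexComplex_avoiding hσF hwσ)
    (Finset.subset_erase.2 ⟨hτF, hwτ⟩)⟩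

theorem pureDim_simplexComplex_avoiding (hσ : σ.Nonempty) (hσF : σ ⊂ F) (hF : F.card = d + 1) :
    PureDim {τ ∈ simplexComplex F | ¬ σ ⊆ τ} (d - 1) := by
  classical
  obtain ⟨v, hv⟩ := hσ
  refine ⟨⟨_, erase_mem_simplexComplex_avoiding hσF hv⟩, fun τ hτ => ?_⟩
  obtain ⟨w, hw, rfl⟩ := exists_eq_erase_of_isFacet_avoiding hσF hτ
  have hσ_pos : 0 < σ.card := Finset.card_pos.2 ⟨v, hv⟩
  have hσ_lt : σ.card < F.card := Finset.card_lt_card hσF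
  rw [Finset.card_erase_of_mem (hσF.subset hw)]
  lia

end Simplex

namespace ElemCollapseVia

variable {K K' : Set (Finset V)} {σ F τ : Finset V} {d : ℕ} {l : List (Finset V)}

theorem eq_sep (h : ElemCollapseVia K K' σ F) : K' = {τ ∈ K | ¬ σ ⊆ τ} :=
  h.2.2.2.2.2

theorem isFacet (h : ElemCollapseVia K K' σ F) : IsFacet K F :=
  h.2.2.1

theorem mem_iff (h : ElemCollapseVia K K' σ F) : τ ∈ K' ↔ τ ∈ K ∧ ¬ σ ⊆ τ := by
  rw [h.eq_sep, Set.mem_sep_iff]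

theorem ssubset (h : ElemCollapseVia K K' σ F) : σ ⊂ F := by
  obtain ⟨-, hσ, hF, hσF, -⟩ := h
  exact hσF.ssubset_of_ne fun h_eq => hσ (h_eq ▸ hF)

theorem notMem (h : ElemCollapseVia K K' σ F) : F ∉ K' :=
  fun hF => (h.mem_iff.1 hF).2 h.ssubset.subset

theorem isComplex (h : ElemCollapseVia K K' σ F) (hK : IsComplex K) : IsComplex K' := by
  refine ⟨fun τ hτ => hK.1 τ (h.mem_iff.1 hτ).1, fun τ hτ ρ hρτ hρ => ?_⟩
  obtain ⟨hτK, hστ⟩ := h.mem_iff.1 hτ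
  exact h.mem_iff.2 ⟨hK.2 τ hτK ρ hρτ hρ, fun hσρ => hστ (hσρ.trans hρτ)⟩

-- A deleted face becomes empty or a face of `K'` once a fixed vertex of `σ` is erased from it.
theorem finite (h : ElemCollapseVia K K' σ F) (hK : IsComplex K) (hK' : K'.Finite) :
    K.Finite := by
  classical
  obtain ⟨v, hv⟩ := Finset.nonempty_iff_ne_empty.2 (hK.1 σ h.1)
  refine (hK'.union ((hK'.insert ∅).image (insert v))).subset fun τ hτ => ?_
  by_cases hστ : σ ⊆ τ
  · refine Or.inr ⟨τ.erase v, ?_, Finset.insert_erase (hστ hv)⟩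
    rcases eq_or_ne (τ.erase v) ∅ with h_empty | h_ne
    · exact Or.inl h_empty
    · exact Or.inr (h.mem_iff.2 ⟨hK.2 τ hτ _ (Finset.erase_subset v τ) h_ne,
        fun hσ => Finset.notMem_erase v τ (hσ hv)⟩)
  · exact Or.inl (h.mem_iff.2 ⟨hτ, hστ⟩)

theorem subset_facet (h : ElemCollapseVia K K' σ F) (hfin : K.Finite) (hτ : τ ∈ K)
    (hστ : σ ⊆ τ) : τ ⊆ F := by
  obtain ⟨-, -, -, -, huniq, -⟩ := h
  obtain ⟨G, hG, hτG⟩ := exists_isFacet_superset hfin hτ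
  exact huniq G hG (hστ.trans hτG) ▸ hτG

theorem isFacet_iff (h : ElemCollapseVia K K' σ F) (hfin : K.Finite) (hF : F.card = d + 1)
    (hpure : PureDim K' d) : IsFacet K τ ↔ IsFacet K' τ ∨ τ = F := by
  constructor
  · intro hτ
    by_cases hστ : σ ⊆ τ
    · exact Or.inr (hτ.2 F h.isFacet.1 (h.subset_facet hfin hτ.1 hστ))
    · exact Or.inl ⟨h.mem_iff.2 ⟨hτ.1, hστ⟩, fun ρ hρ => hτ.2 ρ (h.mem_iff.1 hρ).1⟩
  · rintro (hτ | rfl)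
    · refine ⟨(h.mem_iff.1 hτ.1).1, fun ρ hρ hτρ => hτ.2 ρ (h.mem_iff.2 ⟨hρ, fun hσρ => ?_⟩) hτρ⟩
      have hτF : τ ⊆ F := hτρ.trans (h.subset_facet hfin hρ hσρ)
      have hτ_eq : τ = F := Finset.eq_of_subset_of_card_le hτF (by rw [hF, hpure.2 τ hτ])
      exact h.notMem (hτ_eq ▸ hτ.1)
    · exact h.isFacet

theorem pureDim (h : ElemCollapseVia K K' σ F) (hfin : K.Finite) (hF : F.card = d + 1)
    (hpure : PureDim K' d) : PureDim K d := by
  refine ⟨⟨σ, h.1⟩, fun τ hτ => ?_⟩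
  rcases (h.isFacet_iff hfin hF hpure).1 hτ with hτ' | rfl
  · exact hpure.2 τ hτ'
  · exact hF

theorem generatedByL_eq (h : ElemCollapseVia K K' σ F) (hl : ∀ θ ∈ l, θ ∈ K') :
    generatedByL K l = generatedByL K' l := by
  ext τ
  refine and_congr_left ?_
  rintro ⟨θ, hθ, hτθ⟩
  have hστ : ¬ σ ⊆ τ := fun hστ => (h.mem_iff.1 (hl θ hθ)).2 (hστ.trans hτθ)
  rw [h.mem_iff, and_iff_left hστ]

theorem generatedByL_facet_inter (h : ElemCollapseVia K K' σ F) (hK : IsComplex K) :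
    generatedByL K [F] ∩ K' = {τ ∈ simplexComplex F | ¬ σ ⊆ τ} := by
  ext τ
  constructor
  · rintro ⟨⟨hτ, θ, hθ, hτθ⟩, hτ'⟩
    exact ⟨⟨hK.1 τ hτ, List.mem_singleton.1 hθ ▸ hτθ⟩, (h.mem_iff.1 hτ').2⟩
  · rintro ⟨⟨hτ_ne, hτF⟩, hστ⟩
    have hτ : τ ∈ K := hK.2 F h.isFacet.1 τ hτF hτ_ne
    exact ⟨⟨hτ, F, List.mem_singleton_self F, hτF⟩, h.mem_iff.2 ⟨hτ, hστ⟩⟩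

theorem isShellingUp_concat (h : ElemCollapseVia K K' σ F) (hK : IsComplex K) (hfin : K.Finite)
    (hF : F.card = d + 1) (hpure : PureDim K' d) (hl : IsShellingUp K' d l) :
    IsShellingUp K d (l ++ [F]) := by
  obtain ⟨hnodup, hfacets, hsteps⟩ := hl
  have hlK' : ∀ θ ∈ l, θ ∈ K' := fun θ hθ => ((hfacets θ).1 hθ).1
  have hfin' : K'.Finite := hfin.subset fun τ hτ => (h.mem_iff.1 hτ).1
  refine ⟨?_, fun τ => ?_, upSteps_concat ?_ ?_⟩
  · rw [← List.concat_eq_append]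
    exact hnodup.concat fun hF_mem => h.notMem (hlK' F hF_mem)
  · rw [List.mem_append, List.mem_singleton, hfacets, h.isFacet_iff hfin hF hpure]
  · exact (upSteps_congr fun l' hl' => h.generatedByL_eq fun θ hθ => hlK' θ (hl' hθ)).2 hsteps
  · rw [h.generatedByL_eq hlK', generatedByL_eq_self hfin' hfacets, h.generatedByL_facet_inter hK]
    exact pureDim_simplexComplex_avoiding (Finset.nonempty_iff_ne_empty.2 (hK.1 σ h.1)) h.ssubset hF

end ElemCollapseVia

theorem reflTransGen_of_forall_lt {α : Type*} {r : α → α → Prop} {a b : α} {c : ℕ → α} {n : ℕ}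
    (h_zero : c 0 = a) (h_last : c n = b) (h : ∀ i < n, r (c i) (c (i + 1))) :
    Relation.ReflTransGen r a b := by
  subst h_zero h_last
  exact Relation.ReflTransGen.lift c (fun _ _ => id) _ _
    (reflTransGen_of_succ_of_le (fun i j => r (c i) (c j)) (fun i hi => h i hi.2) n.zero_le)

/-- `K'` arises from `K` by an elementary collapse whose unique containing facet has dimension `d`;
the free face may have any dimension. -/
def CollapseFromDim (d : ℕ) (K K' : Set (Finset V)) : Prop :=
  ∃ j, ElemCollapseIJ K K' d j

theorem finite_pureDim_shellable_of_collapses {d : ℕ} {K L : Set (Finset V)} (hK : IsComplex K)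
    (hcol : Relation.ReflTransGen (CollapseFromDim d) K L) (hfin : L.Finite) (hpure : PureDim L d)
    (hshell : Shellable L d) : K.Finite ∧ PureDim K d ∧ Shellable K d := by
  induction hcol using Relation.ReflTransGen.head_induction_on with
  | refl => exact ⟨hfin, hpure, hshell⟩
  | head hstep _ ih =>
    obtain ⟨j, σ, F, hvia, -, hF⟩ := hstep
    obtain ⟨hfin', hpure', l, hl⟩ := ih (hvia.isComplex hK)
    have hfinK := hvia.finite hK hfin'
    exact ⟨hfinK, hvia.pureDim hfinK hF hpure', l ++ [F],
      hvia.isShellingUp_concat hK hfinK hF hpure' hl⟩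

theorem shellable_of_collapses_2i_general {d : ℕ} {K : Set (Finset V)} (hK : IsComplex K)
    {t : Finset V} (ht : t.card = d + 1)
    (hcol : Relation.ReflTransGen (CollapseFromDim d) K (simplexComplex t)) :
    PureDim K d ∧ Shellable K d :=
  (finite_pureDim_shellable_of_collapses hK hcol (finite_simplexComplex t)
    (pureDim_simplexComplex ht)
    (shellable_simplexComplex (Finset.card_pos.1 (by lia)) d)).2

/-- Observation 13.2. -/
theorem shellable_of_collapses_2i (K : Set (Finset V)) (hK : IsComplex K)
    (hKfin : K.Finite)
    (hdim : ∀ σ ∈ K, σ.card ≤ 3)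
    (t : Finset V) (ht : t.card = 3)
    (hcol : ∃ (c : ℕ → Set (Finset V)) (n : ℕ), c 0 = K ∧
      c n = {σ : Finset V | σ ≠ ∅ ∧ σ ⊆ t} ∧
      ∀ i < n, ElemCollapseIJ (c i) (c (i + 1)) 2 0 ∨
        ElemCollapseIJ (c i) (c (i + 1)) 2 1) :
    PureDim K 2 ∧ Shellable K 2 := by
  obtain ⟨c, n, h_zero, h_last, hsteps⟩ := hcol
  exact shellable_of_collapses_2i_general hK ht
    (reflTransGen_of_forall_lt h_zero h_last fun i hi => (hsteps i hi).elim (⟨0, ·⟩) (⟨1, ·⟩))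

end PaperFormal
end
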